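/- arXiv:1407.2675 — 4 statements merged into one kernel-verified Lean document; each statement's English description precedes it below -/
import Mathlib

section
/- Let Q be a finitely generated projective left Λ-module and let C and D be Λ-submodules of Q. Then the quotient modules Q/C and Q/D are isomorphic as Λ-modules if and only if there exists a Λ-linear automorphism f of Q with f(C) = D. (Consequently, the isomorphism classes of quotients of Q are in one-to-one correspondence with the orbits of submodules of Q under the natural action of Aut_Λ(Q).) -/
/-- One step: a non-injective endomorphism can be corrected to one with smaller kernel. -/
theorem aux_step (K : Type*) [Field K] {Λ : Type*} [Ring Λ] [Algebra K Λ]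
    {M : Type*} [AddCommGroup M] [Module Λ M] [Module K M] [IsScalarTower K Λ M]
    [FiniteDimensional K M] [IsSemisimpleModule Λ M] (N : Submodule Λ M) (f : M →ₗ[Λ] M)
    (hf : LinearMap.range f ⊔ N = ⊤) (hk : LinearMap.ker f ≠ ⊥) :
    ∃ h : M →ₗ[Λ] M, LinearMap.range h ≤ N ∧ LinearMap.ker (f + h) < LinearMap.ker f := by
  obtain ⟨S, hS, hSs⟩ := (IsSemisimpleModule.eq_bot_or_exists_simple_le
    (LinearMap.ker f)).resolve_left hk
  have hfin : FiniteDimensional K (S →ₗ[Λ] M) := by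
    have : FiniteDimensional K S :=
      inferInstanceAs (FiniteDimensional K (S.restrictScalars K))
    refine FiniteDimensional.of_injective
      (LinearMap.restrictScalarsₗ K Λ S M K) (LinearMap.restrictScalars_injective _)
  -- post-composition with f
  let F : (S →ₗ[Λ] M) →ₗ[K] (S →ₗ[Λ] M) :=
    { toFun := fun v => f ∘ₗ v
      map_add' := fun a b => LinearMap.comp_add _ _ _
      map_smul' := fun c v => by
        ext x
        simp only [LinearMap.comp_apply, LinearMap.smul_apply, RingHom.id_apply]
        exact (f.restrictScalars K).map_smul c (v x) }
  have hSne : S.subtype ≠ 0 := by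
    intro h0
    have := IsSimpleModule.nontrivial Λ S
    obtain ⟨x, hx⟩ := exists_ne (0 : S)
    exact hx (Subtype.ext (LinearMap.congr_fun h0 x))
  have hFinj : ¬ Function.Injective F := by
    intro hi
    apply hSne
    apply hi
    rw [map_zero]
    ext x
    exact hS x.2
  have hFsurj : ¬ Function.Surjective F := fun h => hFinj (LinearMap.injective_iff_surjective.mpr h)
  obtain ⟨u, hu⟩ := not_forall.mp hFsurj
  -- complement of range f inside N
  obtain ⟨X, hXN, hX⟩ : ∃ X ≤ N, IsCompl (LinearMap.range f) X := by
    obtain ⟨Y, hY⟩ := exists_isCompl (LinearMap.range f ⊓ N)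
    refine ⟨Y ⊓ N, inf_le_right, ?_, ?_⟩
    · rw [disjoint_iff]
      have := hY.inf_eq_bot
      rw [← this]
      ac_rfl
    · rw [codisjoint_iff, eq_top_iff, ← hf]
      refine sup_le le_sup_left ?_
      have h1 : N = (LinearMap.range f ⊓ N) ⊔ (Y ⊓ N) := by
        rw [← sup_inf_assoc_of_le Y (inf_le_right : LinearMap.range f ⊓ N ≤ N), hY.sup_eq_top,
          top_inf_eq]
      calc N = (LinearMap.range f ⊓ N) ⊔ (Y ⊓ N) := h1
        _ ≤ _ := sup_le_sup_right inf_le_left _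
  let p : M →ₗ[Λ] X := Submodule.projectionOnto X (LinearMap.range f) hX.symm
  have hw : p ∘ₗ u ≠ 0 := by
    intro h0
    apply hu
    have hr : ∀ x, u x ∈ LinearMap.range f := by
      intro x
      rw [← Submodule.ker_projectionOnto hX.symm]
      exact LinearMap.congr_fun h0 x
    obtain ⟨s, hs⟩ := IsSemisimpleModule.lifting_property f.rangeRestrict
      f.surjective_rangeRestrict (u.codRestrict _ hr)
    refine ⟨s, ?_⟩
    ext x
    exact congrArg Subtype.val (LinearMap.congr_fun hs x)
  have hwi := LinearMap.injective_of_ne_zero hw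
  obtain ⟨π, hπ⟩ := IsSemisimpleModule.extension_property S.subtype S.injective_subtype
    (LinearMap.id : S →ₗ[Λ] S)
  have hkey : ∀ x, (f + X.subtype ∘ₗ (p ∘ₗ u) ∘ₗ π) x = 0 → f x = 0 ∧ π x = 0 := by
    intro x hx
    have h1 : f x + (((p ∘ₗ u) (π x) : X) : M) = 0 := hx
    have h2 : ((((p ∘ₗ u) (π x)) : X) : M) = 0 := by
      refine Submodule.disjoint_def.mp hX.disjoint _ ?_ (Subtype.prop _)
      rw [← neg_eq_of_add_eq_zero_right h1]
      exact Submodule.neg_mem _ ⟨x, rfl⟩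
    refine ⟨by rwa [h2, add_zero] at h1, ?_⟩
    apply hwi
    rw [map_zero]
    exact Subtype.ext h2
  refine ⟨X.subtype ∘ₗ (p ∘ₗ u) ∘ₗ π, ?_, ?_⟩
  · rintro _ ⟨x, rfl⟩
    exact hXN (Subtype.prop _)
  · refine lt_of_le_of_ne (fun x hx => (hkey x hx).1) fun he => hSne ?_
    ext x
    have h1 : (x : M) ∈ LinearMap.ker f := hS x.2
    rw [← he] at h1
    have h2 := (hkey x h1).2
    have h3 : π (x : M) = x := LinearMap.congr_fun hπ x
    rw [h2] at h3
    simp [← h3]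

theorem aux_semisimple (K : Type*) [Field K] {Λ : Type*} [Ring Λ] [Algebra K Λ]
    {M : Type*} [AddCommGroup M] [Module Λ M] [Module K M] [IsScalarTower K Λ M]
    [FiniteDimensional K M] [IsSemisimpleModule Λ M] [IsArtinian Λ M] (N : Submodule Λ M) :
    ∀ (L : Submodule Λ M) (f : M →ₗ[Λ] M), LinearMap.ker f = L → LinearMap.range f ⊔ N = ⊤ →
    ∃ h : M →ₗ[Λ] M, LinearMap.range h ≤ N ∧ LinearMap.ker (f + h) = ⊥ := by
  intro L
  induction L using WellFoundedLT.induction with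
  | ind L ih =>
    intro f hL hf
    by_cases hk : LinearMap.ker f = ⊥
    · exact ⟨0, by simp, by simpa using hk⟩
    obtain ⟨h, hh, hlt⟩ := aux_step K N f hf hk
    have hf' : LinearMap.range (f + h) ⊔ N = ⊤ := by
      rw [eq_top_iff, ← hf]
      refine sup_le ?_ le_sup_right
      rintro _ ⟨x, rfl⟩
      have : f x = (f + h) x + -(h x) := by simp
      rw [this]
      exact Submodule.add_mem_sup ⟨x, rfl⟩ (N.neg_mem (hh ⟨x, rfl⟩))
    obtain ⟨h', hh', hb⟩ := ih _ (hL ▸ hlt) (f + h) rfl hf'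
    refine ⟨h + h', ?_, by rwa [← add_assoc]⟩
    rintro _ ⟨x, rfl⟩
    exact N.add_mem (hh ⟨x, rfl⟩) (hh' ⟨x, rfl⟩)

/-- Let `Λ` be a finite-dimensional algebra over a field `K`, and let `Q` be a
finitely generated projective left `Λ`-module with `Λ`-submodules `C` and `D`.  Then `Q ⧸ C` and
`Q ⧸ D` are isomorphic as `Λ`-modules if and only if there is a `Λ`-linear automorphism `f` of `Q`
with `f(C) = D`. -/
theorem quotients_iso_iff_exists_automorphism_map_eq
    (K : Type*) [Field K] (Λ : Type*) [Ring Λ] [Algebra K Λ] [FiniteDimensional K Λ]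
    (Q : Type*) [AddCommGroup Q] [Module Λ Q]
    [Module.Finite Λ Q] [Module.Projective Λ Q]
    (C D : Submodule Λ Q) :
    Nonempty ((Q ⧸ C) ≃ₗ[Λ] (Q ⧸ D)) ↔
      ∃ f : Q ≃ₗ[Λ] Q, Submodule.map (f : Q →ₗ[Λ] Q) C = D := by
  constructor
  · rintro ⟨φ⟩
    let : Module K Q := Module.compHom Q (algebraMap K Λ)
    have : IsScalarTower K Λ Q := ⟨fun c a q => by
      change _ = algebraMap K Λ c • (a • q)
      rw [Algebra.smul_def, mul_smul]⟩
    have : FiniteDimensional K Q := Module.Finite.trans Λ Q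
    have : IsArtinianRing Λ := IsArtinianRing.of_finite K Λ
    have : IsNoetherianRing Λ := IsNoetherianRing.of_finite K Λ
    obtain ⟨f, hf⟩ := Module.projective_lifting_property D.mkQ
      (φ.toLinearMap ∘ₗ C.mkQ) D.mkQ_surjective
    have hfD : LinearMap.range f ⊔ D = ⊤ := by
      rw [eq_top_iff]
      intro q _
      obtain ⟨x, hx⟩ := C.mkQ_surjective (φ.symm (D.mkQ q))
      have h1 : D.mkQ (f x) = D.mkQ q := by
        have := LinearMap.congr_fun hf x
        simp only [LinearMap.comp_apply] at this
        rw [this, hx]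
        simp
      have h2 : q - f x ∈ D := by
        rw [← Submodule.ker_mkQ D, LinearMap.mem_ker, map_sub, h1, sub_self]
      have h3 : q = f x + (q - f x) := by abel
      rw [h3]
      exact Submodule.add_mem_sup ⟨x, rfl⟩ h2
    let J := Module.jacobson Λ Q
    have : IsSemisimpleModule Λ (Q ⧸ J) :=
      (IsArtinian.isSemisimpleModule_iff_jacobson Λ (Q ⧸ J)).mpr (Module.jacobson_quotient_jacobson Λ Q)
    have : FiniteDimensional K (Q ⧸ J) := Module.Finite.trans Λ (Q ⧸ J)
    let fb : (Q ⧸ J) →ₗ[Λ] (Q ⧸ J) := J.mapQ J f (Module.le_comap_jacobson f)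
    have hfb : LinearMap.range fb ⊔ D.map J.mkQ = ⊤ := by
      have h1 : LinearMap.range fb = (LinearMap.range f).map J.mkQ := by
        rw [← LinearMap.range_comp]
        have : fb ∘ₗ J.mkQ = J.mkQ ∘ₗ f := Submodule.mapQ_mkQ _ _ _
        rw [← this, LinearMap.range_comp, Submodule.range_mkQ, Submodule.map_top]
      rw [h1, ← Submodule.map_sup, hfD, Submodule.map_top, Submodule.range_mkQ]
    obtain ⟨hb, hbr, hbk⟩ := aux_semisimple K (D.map J.mkQ) _ fb rfl hfb
    have hbi : Function.Injective (fb + hb) := LinearMap.ker_eq_bot.mp hbk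
    have hbs : Function.Surjective (fb + hb) :=
      (LinearMap.injective_iff_surjective
        (f := (fb + hb).restrictScalars K)).mp hbi
    -- lift `hb` to a map into `D`
    let d : D →ₗ[Λ] D.map J.mkQ := J.mkQ.submoduleMap D
    obtain ⟨h, hh⟩ := Module.projective_lifting_property d
      ((hb.codRestrict (D.map J.mkQ) fun x => hbr ⟨x, rfl⟩) ∘ₗ J.mkQ)
      (J.mkQ.submoduleMap_surjective D)
    have hh' : ∀ x, J.mkQ (h x : Q) = hb (J.mkQ x) := fun x =>
      congrArg Subtype.val (LinearMap.congr_fun hh x)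
    let g : Q →ₗ[Λ] Q := f + D.subtype ∘ₗ h
    have hgx : ∀ x, J.mkQ (g x) = (fb + hb) (J.mkQ x) := by
      intro x
      change J.mkQ (f x + (h x : Q)) = _
      rw [map_add, hh']
      rfl
    have hgs : LinearMap.range g = ⊤ := by
      by_contra hne
      obtain ⟨m, hm, hle⟩ := (eq_top_or_exists_le_coatom (LinearMap.range g)).resolve_left hne
      apply hm.1
      rw [eq_top_iff]
      intro q _
      obtain ⟨y, hy⟩ := hbs (J.mkQ q)
      obtain ⟨x, rfl⟩ := J.mkQ_surjective y
      rw [← hgx] at hy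
      have h2 : q - g x ∈ J := by
        rw [← Submodule.ker_mkQ J, LinearMap.mem_ker, map_sub, hy, sub_self]
      have h3 : q = g x + (q - g x) := by abel
      rw [h3]
      exact m.add_mem (hle ⟨x, rfl⟩) ((sInf_le hm : J ≤ m) h2)
    have hgsurj : Function.Surjective g := LinearMap.range_eq_top.mp hgs
    have hginj : Function.Injective g :=
      (LinearMap.injective_iff_surjective (f := g.restrictScalars K)).mpr hgsurj
    have hgφ : ∀ x, D.mkQ (g x) = φ (C.mkQ x) := by
      intro x
      change D.mkQ (f x + (h x : Q)) = _
      have h0 : D.mkQ (h x : Q) = 0 := by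
        rw [← LinearMap.mem_ker, Submodule.ker_mkQ]
        exact (h x).2
      rw [map_add, h0, add_zero]
      exact LinearMap.congr_fun hf x
    have hmem : ∀ x, g x ∈ D ↔ x ∈ C := by
      intro x
      rw [← Submodule.ker_mkQ D, LinearMap.mem_ker, hgφ, LinearEquiv.map_eq_zero_iff,
        ← LinearMap.mem_ker, Submodule.ker_mkQ]
    refine ⟨LinearEquiv.ofBijective g ⟨hginj, hgsurj⟩, ?_⟩
    ext q
    constructor
    · rintro ⟨x, hx, rfl⟩
      exact (hmem x).mpr hx
    · intro hq
      obtain ⟨x, rfl⟩ := hgsurj q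
      exact ⟨x, (hmem x).mp hq, rfl⟩
  · rintro ⟨f, hf⟩
    exact ⟨Submodule.Quotient.equiv C D f hf⟩
end

section
/- Assume in addition that K is algebraically closed, and let Q be a finitely generated projective left Λ-module. Then the canonical surjective group homomorphism Aut_Λ(Q) → Aut_Λ(Q/JQ) splits: there exists a group homomorphism s : Aut_Λ(Q/JQ) → Aut_Λ(Q) such that for every h ∈ Aut_Λ(Q/JQ) the automorphism s(h) induces h on Q/JQ. Consequently Aut_Λ(Q) is the semidirect product of the normal subgroup { id_Q + g : g ∈ Hom_Λ(Q, JQ) } with a subgroup isomorphic to Aut_Λ(Q/JQ). -/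
theorem liftPair {A B : Type*} [Ring A] [Ring B] (f : A →+* B)
    (hs : Function.Surjective f) (hn : ∀ x ∈ RingHom.ker f, IsNilpotent x)
    (e c : A) (he : e * e = e) (hc : c * c = c) (x y : B)
    (hxy : x * y = f e) (hyx : y * x = f c) (hx : f e * x * f c = x) (hy : f c * y * f e = y) :
    ∃ u v : A, f u = x ∧ f v = y ∧ u * v = e ∧ v * u = c ∧ u * c = u ∧ c * v = v ∧
      e * u = u := by
  obtain ⟨u', hu'⟩ := hs x
  obtain ⟨v', hv'⟩ := hs y
  set u0 := e * u' * c with hu0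
  set v := c * v' * e with hv
  have fu0 : f u0 = x := by simp [hu0, hu', hx]
  have fv : f v = y := by simp [hv, hv', hy]
  have u0c : u0 * c = u0 := by rw [hu0, mul_assoc, hc]
  have cv : c * v = v := by rw [hv, ← mul_assoc, ← mul_assoc, hc]
  have ve : v * e = v := by rw [hv, mul_assoc, he]
  have eu0 : e * u0 = u0 := by rw [hu0, ← mul_assoc, ← mul_assoc, he]
  clear_value u0 v
  have hnn : IsNilpotent (u0 * v - e) := hn _ (by simp [RingHom.mem_ker, fu0, fv, hxy])
  obtain ⟨w, hw⟩ := hnn.isUnit_one_add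
  have fw : f (↑w⁻¹ : A) = 1 := by
    have h1 : f (w : A) = 1 := by rw [hw]; simp [fu0, fv, hxy]
    have h2 : f ((↑w⁻¹ : A) * w) = 1 := by simp
    rwa [map_mul, h1, mul_one] at h2
  have key : u0 * v = (w : A) * e := by
    rw [hw, add_mul, sub_mul, he, mul_assoc, ve]; simp
  have feu : f e * x = x := by rw [← fu0, ← map_mul, eu0]
  have huv : e * (↑w⁻¹ : A) * u0 * v = e := by
    rw [mul_assoc _ u0, key, mul_assoc, Units.inv_mul_cancel_left, he]
  have huc : e * (↑w⁻¹ : A) * u0 * c = e * (↑w⁻¹ : A) * u0 := by rw [mul_assoc _ u0, u0c]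
  have fu : f (e * (↑w⁻¹ : A) * u0) = x := by simp [fw, fu0, feu]
  refine ⟨e * (↑w⁻¹ : A) * u0, v, fu, fv, huv, ?_, huc, cv, ?_⟩
  · generalize e * (↑w⁻¹ : A) * u0 = u at *
    have hid : (v * u) * (v * u) = v * u := by
      rw [← mul_assoc, mul_assoc v u v, huv, ve]
    have h1 : v * u * c = v * u := by rw [mul_assoc, huc]
    have h2 : c * (v * u) = v * u := by rw [← mul_assoc, cv]
    exact eq_of_isNilpotent_sub_of_isIdempotentElem_of_commute hid hc
      (hn _ (by simp [RingHom.mem_ker, fu, fv, hyx])) (h1.trans h2.symm)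
  · rw [← mul_assoc, ← mul_assoc, he]

theorem liftMatrix (K : Type*) [Field K] {A : Type*} [Ring A] [Algebra K A]
    {n : ℕ} (d : Fin n → ℕ) (hd : ∀ i, NeZero (d i))
    (f : A →ₐ[K] (Π i, Matrix (Fin (d i)) (Fin (d i)) K))
    (hs : Function.Surjective f) (hn : ∀ x ∈ RingHom.ker (f : A →+* (Π i, Matrix (Fin (d i)) (Fin (d i)) K)), IsNilpotent x) :
    ∃ g : (Π i, Matrix (Fin (d i)) (Fin (d i)) K) →ₐ[K] A, ∀ x, f (g x) = x := by
  classical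
  let m : ∀ i, Fin (d i) → Fin (d i) → (Π i, Matrix (Fin (d i)) (Fin (d i)) K) :=
    fun i a b => Pi.single i (Matrix.single a b 1)
  have mm : ∀ i a b c, m i a b * m i b c = m i a c := fun i a b c => by
    simp only [m]; rw [← Pi.single_mul]; simp
  have mm0 : ∀ i a b b' c, b ≠ b' → m i a b * m i b' c = 0 := fun i a b b' c h => by
    simp only [m]; rw [← Pi.single_mul]; simp [h]
  have mm1 : ∀ i j a b a' b', i ≠ j → m i a b * m j a' b' = 0 := fun i j a b a' b' h => by
    ext k : 1
    simp only [m, Pi.mul_apply, Pi.zero_apply]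
    rcases eq_or_ne k i with rfl | hk
    · rw [Pi.single_eq_of_ne h, mul_zero]
    · rw [Pi.single_eq_of_ne hk, zero_mul]
  have msum : ∀ M : (Π i, Matrix (Fin (d i)) (Fin (d i)) K),
      ∑ i, ∑ a, ∑ b, M i a b • m i a b = M := fun M => by
    have : ∀ i, ∑ a, ∑ b, M i a b • m i a b = Pi.single i (M i) := fun i => by
      conv_rhs => rw [Matrix.matrix_eq_sum_single (M i)]
      simp only [m, ← Pi.single_smul, Matrix.smul_single, smul_eq_mul, mul_one]
      exact ((map_sum (AddMonoidHom.single
        (fun i => Matrix (Fin (d i)) (Fin (d i)) K) i) _ _).trans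
        (Finset.sum_congr rfl fun a _ => map_sum (AddMonoidHom.single
        (fun i => Matrix (Fin (d i)) (Fin (d i)) K) i) _ _)).symm
    simp only [this]
    exact Finset.univ_sum_single M
  have hE : CompleteOrthogonalIdempotents
      (fun p : (Σ i, Fin (d i)) => m p.1 p.2 p.2) := by
    refine ⟨⟨fun p => mm _ _ _ _, ?_⟩, ?_⟩
    · rintro ⟨i, a⟩ ⟨j, b⟩ h
      rcases eq_or_ne i j with rfl | hij
      · exact mm0 _ _ _ _ _ (by rintro rfl; exact h rfl)
      · exact mm1 _ _ _ _ _ _ hij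
    · rw [Fintype.sum_sigma]
      conv_rhs => rw [← msum 1]
      refine Finset.sum_congr rfl fun i _ => Finset.sum_congr rfl fun a _ => ?_
      simp [Matrix.one_apply]
  obtain ⟨e, he, hfe⟩ := CompleteOrthogonalIdempotents.lift_of_isNilpotent_ker
    (f : A →+* (Π i, Matrix (Fin (d i)) (Fin (d i)) K)) hn hE (fun p => hs _)
  have hfe' : ∀ i a, f (e ⟨i, a⟩) = m i a a := fun i a => congr_fun hfe ⟨i, a⟩
  have := fun i a => liftPair (f : A →+* (Π i, Matrix (Fin (d i)) (Fin (d i)) K)) hs hn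
    (e ⟨i, 0⟩) (e ⟨i, a⟩) (he.idem _) (he.idem _) (m i 0 a) (m i a 0)
    (by simp [hfe', mm]) (by simp [hfe', mm]) (by simp [hfe', mm]) (by simp [hfe', mm])
  choose u v fu fv uv vu uc cv eu using this
  have uv0 : ∀ i a b, a ≠ b → u i a * v i b = 0 := fun i a b h => by
    rw [← uc, ← cv, mul_assoc, ← mul_assoc (e _),
      he.ortho (show (⟨i, a⟩ : Σ i, Fin (d i)) ≠ ⟨i, b⟩ by simpa using h)]; simp
  have uv1 : ∀ i j a b, i ≠ j → u i a * v j b = 0 := fun i j a b h => by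
    rw [← uc, ← cv, mul_assoc, ← mul_assoc (e _),
      he.ortho (show (⟨i, a⟩ : Σ i, Fin (d i)) ≠ ⟨j, b⟩ from fun h' => h (congrArg Sigma.fst h'))]
    simp
  let g : (Π i, Matrix (Fin (d i)) (Fin (d i)) K) →ₗ[K] A :=
    { toFun := fun M => ∑ i, ∑ a, ∑ b, M i a b • (v i a * u i b)
      map_add' := fun M N => by simp [add_smul, Finset.sum_add_distrib]
      map_smul' := fun r M => by simp [mul_smul, Finset.smul_sum] }
  have gdef : ∀ M, g M = ∑ i, ∑ a, ∑ b, M i a b • (v i a * u i b) := fun M => rfl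
  refine ⟨AlgHom.ofLinearMap g ?_ ?_, fun M => ?_⟩
  · rw [gdef, ← he.complete, Fintype.sum_sigma]
    refine Finset.sum_congr rfl fun i _ => Finset.sum_congr rfl fun a _ => ?_
    simp [Matrix.one_apply, vu]
  · intro M N
    have e1 : ∀ i j a b c c', (v i a * u i b) * (v j c * u j c') =
        if h : i = j then (if b = h ▸ c then v i a * u i (h ▸ c') else 0) else 0 := by
      intro i j a b c c'
      split_ifs with h h'
      · subst h
        simp only at h'
        subst h'
        rw [mul_assoc, ← mul_assoc (u i b), uv, eu]
      · subst h
        rw [mul_assoc, ← mul_assoc (u i b), uv0 _ _ _ h']; simp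
      · rw [mul_assoc, ← mul_assoc (u i b), uv1 _ _ _ _ h]; simp
    have e2 : ∀ i a b, (v i a * u i b) * g N = ∑ c', N i b c' • (v i a * u i c') := by
      intro i a b
      rw [gdef, Finset.mul_sum, Finset.sum_eq_single i]
      · rw [Finset.mul_sum, Finset.sum_eq_single b]
        · rw [Finset.mul_sum]
          exact Finset.sum_congr rfl fun c' _ => by rw [mul_smul_comm, e1]; simp
        · intro c _ hc
          rw [Finset.mul_sum]
          exact Finset.sum_eq_zero fun c' _ => by rw [mul_smul_comm, e1]; simp [hc.symm]
        · simp
      · intro j _ hj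
        simp only [Finset.mul_sum]
        exact Finset.sum_eq_zero fun c _ => Finset.sum_eq_zero fun c' _ => by
          rw [mul_smul_comm, e1]; simp [hj.symm]
      · simp
    rw [gdef M, gdef (M * N)]
    simp only [Finset.sum_mul, smul_mul_assoc, e2, Finset.smul_sum]
    refine Finset.sum_congr rfl fun i _ => Finset.sum_congr rfl fun a _ => ?_
    rw [Finset.sum_comm]
    refine Finset.sum_congr rfl fun c _ => ?_
    simp [Matrix.mul_apply, Finset.sum_smul, mul_smul]
  · conv_rhs => rw [← msum M]
    have fu' : ∀ i a, f (u i a) = m i 0 a := fu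
    have fv' : ∀ i a, f (v i a) = m i a 0 := fv
    simp [gdef, fu', fv', mm]

theorem endLift (K : Type*) [Field K] [IsAlgClosed K]
    (Λ : Type*) [Ring Λ] [Algebra K Λ] [FiniteDimensional K Λ]
    (Q : Type*) [AddCommGroup Q] [Module Λ Q]
    [Module.Finite Λ Q] [Module.Projective Λ Q] (N : Submodule Λ Q)
    (hN : N = Ring.jacobson Λ • (⊤ : Submodule Λ Q)) :
    ∃ g : Module.End Λ (Q ⧸ N) →* Module.End Λ Q,
      ∀ h x, N.mkQ (g h x) = h (N.mkQ x) := by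
  classical
  let _ : Module K Q := Module.compHom Q (algebraMap K Λ)
  have tower : IsScalarTower K Λ Q := IsScalarTower.of_algebraMap_smul fun _ _ => rfl
  have : IsArtinianRing Λ := IsArtinianRing.of_finite K Λ
  have : Module.Finite K Q := Module.Finite.trans Λ Q
  have : Module.Finite K (Q ⧸ N) := Module.Finite.trans Λ (Q ⧸ N)
  have : Module.Finite K (Module.End Λ (Q ⧸ N)) := inferInstance
  have : IsSemisimpleModule Λ (Q ⧸ N) := by
    have h : Module.IsTorsionBySet Λ (Q ⧸ N) (Ring.jacobson Λ) := by
      rw [Module.isTorsionBySet_quotient_iff]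
      exact fun m i hi => hN ▸ Submodule.smul_mem_smul hi trivial
    let _ := h.module
    exact (h.semilinearMap.isSemisimpleModule_iff_of_bijective Function.bijective_id).2
      inferInstance
  have := IsSemisimpleRing.moduleEnd (R := Λ) (M := Q ⧸ N)
  have stab : ∀ g : Module.End Λ Q, N ≤ N.comap g := by
    intro g
    rw [← Submodule.map_le_iff_le_comap]
    subst hN
    rw [Submodule.map_smul'']
    exact smul_mono_right _ le_top
  let f : Module.End Λ Q →ₐ[K] Module.End Λ (Q ⧸ N) :=
    { toFun := fun g => N.mapQ N g (stab g)
      map_one' := by ext; rfl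
      map_mul' := fun _ _ => by ext; rfl
      map_zero' := by ext; rfl
      map_add' := fun _ _ => by ext; rfl
      commutes' := fun _ => by ext; rfl }
  have hf : ∀ g x, f g (N.mkQ x) = N.mkQ (g x) := fun g x => rfl
  have hs : Function.Surjective f := by
    intro h
    obtain ⟨g, hg⟩ := Module.projective_lifting_property N.mkQ (h ∘ₗ N.mkQ) N.mkQ_surjective
    exact ⟨g, by ext x; exact LinearMap.congr_fun hg x⟩
  have hnil : ∀ x ∈ RingHom.ker (f : Module.End Λ Q →+* Module.End Λ (Q ⧸ N)), IsNilpotent x := by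
    intro g hg
    have hg1 : ∀ x, g x ∈ N := fun x => by
      rw [← N.ker_mkQ, LinearMap.mem_ker, ← hf, show f g = 0 from hg]; rfl
    have hg2 : ∀ n, LinearMap.range (g ^ n) ≤ Ring.jacobson Λ ^ n • (⊤ : Submodule Λ Q) := by
      intro n
      induction n with
      | zero =>
        rw [(Ring.jacobson Λ).pow_zero, Ideal.one_eq_top, Submodule.top_smul]
        exact le_top
      | succ n ih =>
        rintro _ ⟨x, rfl⟩
        rw [pow_succ', Module.End.mul_apply]
        have h2 := Submodule.mem_map_of_mem (f := g) (ih ⟨x, rfl⟩)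
        rw [Submodule.map_smul''] at h2
        rw [(Ring.jacobson Λ).pow_succ, Submodule.mul_smul]
        refine Submodule.smul_mono le_rfl ?_ h2
        rintro _ ⟨y, -, rfl⟩
        exact hN ▸ hg1 y
    obtain ⟨n, hn⟩ := IsSemiprimaryRing.isNilpotent (R := Λ)
    refine ⟨n, ?_⟩
    have := hg2 n
    rw [hn] at this
    rw [← LinearMap.range_eq_bot, eq_bot_iff]
    simpa using this
  obtain ⟨n, d, hd, ⟨e⟩⟩ :=
    IsSemisimpleRing.exists_algEquiv_pi_matrix_of_isAlgClosed K (Module.End Λ (Q ⧸ N))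
  obtain ⟨g, hg⟩ := liftMatrix K d hd (e.toAlgHom.comp f) (e.surjective.comp hs) (by
    intro x hx
    refine hnil x ?_
    have hx' : e (f x) = 0 := hx
    exact (map_eq_zero_iff e e.injective).1 hx')
  refine ⟨(g.comp e.toAlgHom).toRingHom.toMonoidHom, fun h x => ?_⟩
  have : f (g (e h)) = h := e.injective (hg (e h))
  rw [← hf]
  exact LinearMap.congr_fun this _

/-- Let `Λ` be a finite-dimensional algebra over an algebraically closed field
`K` and `Q` a finitely generated projective left `Λ`-module.  The canonical surjection
`Aut_Λ(Q) → Aut_Λ(Q/JQ)` splits via a group homomorphism `s`, each `s h` inducing `h` on `Q/JQ`;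
consequently `Aut_Λ(Q)` is the semidirect product of the normal subgroup
`{ id + g : g ∈ Hom_Λ(Q, JQ) }` with the image of `s` (a subgroup isomorphic to `Aut_Λ(Q/JQ)`),
which is expressed here by the bijectivity of `(u, h) ↦ u * s h`. -/
theorem aut_to_aut_of_top_splits
    (K : Type*) [Field K] [IsAlgClosed K]
    (Λ : Type*) [Ring Λ] [Algebra K Λ] [FiniteDimensional K Λ]
    (Q : Type*) [AddCommGroup Q] [Module Λ Q]
    [Module.Finite Λ Q] [Module.Projective Λ Q] :
    ∃ s : (((Q ⧸ ((⊥ : Ideal Λ).jacobson • (⊤ : Submodule Λ Q))) ≃ₗ[Λ]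
            (Q ⧸ ((⊥ : Ideal Λ).jacobson • (⊤ : Submodule Λ Q)))) →* (Q ≃ₗ[Λ] Q)),
      (∀ (h : (Q ⧸ ((⊥ : Ideal Λ).jacobson • (⊤ : Submodule Λ Q))) ≃ₗ[Λ]
            (Q ⧸ ((⊥ : Ideal Λ).jacobson • (⊤ : Submodule Λ Q)))) (x : Q),
        (Submodule.Quotient.mk ((s h) x) :
            Q ⧸ ((⊥ : Ideal Λ).jacobson • (⊤ : Submodule Λ Q)))
          = h (Submodule.Quotient.mk x)) ∧
      Function.Bijective
        (fun p : {u : Q ≃ₗ[Λ] Q // ∃ g : Q →ₗ[Λ] Q,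
              LinearMap.range g ≤ (⊥ : Ideal Λ).jacobson • (⊤ : Submodule Λ Q) ∧
              (u : Q →ₗ[Λ] Q) = LinearMap.id + g} ×
            ((Q ⧸ ((⊥ : Ideal Λ).jacobson • (⊤ : Submodule Λ Q))) ≃ₗ[Λ]
              (Q ⧸ ((⊥ : Ideal Λ).jacobson • (⊤ : Submodule Λ Q)))) =>
          (p.1 : Q ≃ₗ[Λ] Q) * s p.2) := by
  classical
  generalize hN : (⊥ : Ideal Λ).jacobson • (⊤ : Submodule Λ Q) = N
  obtain ⟨g, hg⟩ := endLift K Λ Q N (by rw [← hN, Ideal.jacobson_bot])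
  let s : ((Q ⧸ N) ≃ₗ[Λ] (Q ⧸ N)) →* (Q ≃ₗ[Λ] Q) :=
    ((LinearMap.GeneralLinearGroup.generalLinearEquiv Λ Q).toMonoidHom.comp (Units.map g)).comp
      (LinearMap.GeneralLinearGroup.generalLinearEquiv Λ (Q ⧸ N)).symm.toMonoidHom
  have hs : ∀ h x, N.mkQ (s h x) = h (N.mkQ x) := fun h x => hg _ x
  have hu : ∀ (u : Q ≃ₗ[Λ] Q), (∃ g : Q →ₗ[Λ] Q, LinearMap.range g ≤ N ∧
      (u : Q →ₗ[Λ] Q) = LinearMap.id + g) ↔ ∀ x, N.mkQ (u x) = N.mkQ x := by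
    intro u
    constructor
    · rintro ⟨g, h1, h2⟩ x
      have : u x = x + g x := LinearMap.congr_fun h2 x
      rw [this, map_add, (by simpa using h1 ⟨x, rfl⟩ : N.mkQ (g x) = 0), add_zero]
    · intro h
      refine ⟨(u : Q →ₗ[Λ] Q) - LinearMap.id, ?_, by simp⟩
      rintro _ ⟨x, rfl⟩
      exact (Submodule.Quotient.eq N).1 (h x)
  refine ⟨s, hs, ?_, ?_⟩
  · rintro ⟨⟨u, hu1⟩, h⟩ ⟨⟨u', hu1'⟩, h'⟩ heq
    have heq : u * s h = u' * s h' := heq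
    have hh : h = h' := by
      ext x
      obtain ⟨x, rfl⟩ := N.mkQ_surjective x
      rw [← hs, ← hs, ← (hu u).1 hu1 (s h x), ← (hu u').1 hu1' (s h' x)]
      exact congrArg N.mkQ (LinearEquiv.congr_fun heq x)
    subst hh
    have := mul_right_cancel heq
    subst this
    rfl
  · intro t
    have stab : ∀ t : Q ≃ₗ[Λ] Q, N.map (t : Q →ₗ[Λ] Q) = N := by
      intro t
      rw [← hN, Submodule.map_smul'']
      simp
    let h : (Q ⧸ N) ≃ₗ[Λ] (Q ⧸ N) := Submodule.Quotient.equiv N N t (stab t)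
    have hh : ∀ x, h (N.mkQ x) = N.mkQ (t x) := fun x => rfl
    refine ⟨⟨⟨t * (s h)⁻¹, (hu _).2 fun x => ?_⟩, h⟩, by simp⟩
    have : x = s h ((s h)⁻¹ x) := ((s h).apply_symm_apply x).symm
    conv_rhs => rw [this, hs, hh]
    rfl
end

section
/- Let Q be a finitely generated projective left Λ-module, C a Λ-submodule of Q, and M = Q/C. Let Stab = { g ∈ Hom_Λ(Q, JQ) : g(C) ⊆ C }, a K-subspace of Hom_Λ(Q, JQ). Then dim_K Hom_Λ(Q, JQ) − dim_K Stab = dim_K Hom_Λ(Q, JM) − dim_K Hom_Λ(M, JM), where all dimensions are finite. -/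
/-- The radical submodule `J•X` of a `Λ`-module `X`, where `J` is the Jacobson radical of `Λ`. -/
def radSMul (Λ : Type*) [Ring Λ] (X : Type*) [AddCommGroup X] [Module Λ X] :
    Submodule Λ X :=
  (⊥ : Ideal Λ).jacobson • (⊤ : Submodule Λ X)

/-- The stabilizer `{ g ∈ Hom_Λ(Q, JQ) : g(C) ⊆ C }`, a `K`-subspace of `Hom_Λ(Q, JQ)`. -/
def homStab (K : Type*) [Field K] (Λ : Type*) [Ring Λ] [Algebra K Λ]
    (Q : Type*) [AddCommGroup Q] [Module Λ Q] [Module K Q] [IsScalarTower K Λ Q]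
    (C : Submodule Λ Q) :
    Submodule K (Q →ₗ[Λ] ↥(radSMul Λ Q)) where
  carrier := {g | ∀ x ∈ C, ((g x : Q) ∈ C)}
  add_mem' {g h} hg hh x hx := by
    simpa using C.add_mem (hg x hx) (hh x hx)
  zero_mem' x hx := by simp
  smul_mem' k g hg x hx := by
    simpa using C.smul_of_tower_mem k (hg x hx)

theorem radSMul_map_mkQ (Λ : Type*) [Ring Λ] (Q : Type*) [AddCommGroup Q] [Module Λ Q]
    (C : Submodule Λ Q) :
    (radSMul Λ Q).map C.mkQ = radSMul Λ (Q ⧸ C) := by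
  unfold radSMul
  rw [Submodule.map_smul'', Submodule.map_top, Submodule.range_mkQ]

/-- The restriction `JQ → J(Q/C)` of the projection. -/
def radProj (Λ : Type*) [Ring Λ] (Q : Type*) [AddCommGroup Q] [Module Λ Q]
    (C : Submodule Λ Q) : ↥(radSMul Λ Q) →ₗ[Λ] ↥(radSMul Λ (Q ⧸ C)) :=
  C.mkQ.restrict (fun x hx => by
    rw [← radSMul_map_mkQ]; exact Submodule.mem_map_of_mem hx)

theorem radProj_surjective (Λ : Type*) [Ring Λ] (Q : Type*) [AddCommGroup Q] [Module Λ Q]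
    (C : Submodule Λ Q) : Function.Surjective (radProj Λ Q C) := by
  rintro ⟨y, hy⟩
  have hy' := hy
  rw [← radSMul_map_mkQ] at hy'
  obtain ⟨x, hx, rfl⟩ := hy'
  exact ⟨⟨x, hx⟩, rfl⟩

theorem finiteDimensional_hom (K : Type*) [Field K] (Λ : Type*) [Ring Λ] [Algebra K Λ]
    (X Y : Type*) [AddCommGroup X] [Module Λ X] [Module K X] [IsScalarTower K Λ X]
    [AddCommGroup Y] [Module Λ Y] [Module K Y] [IsScalarTower K Λ Y]
    [FiniteDimensional K X] [FiniteDimensional K Y] :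
    FiniteDimensional K (X →ₗ[Λ] Y) := by
  let f : (X →ₗ[Λ] Y) →ₗ[K] (X →ₗ[K] Y) :=
    { toFun := fun g => g.restrictScalars K
      map_add' := fun _ _ => rfl
      map_smul' := fun _ _ => rfl }
  refine FiniteDimensional.of_injective f ?_
  intro a b hab
  ext x
  exact LinearMap.congr_fun hab x

theorem finrank_pullback (K V W U : Type*) [Field K] [AddCommGroup V] [AddCommGroup W]
    [AddCommGroup U] [Module K V] [Module K W] [Module K U]
    [FiniteDimensional K V] [FiniteDimensional K W]
    (Φ : V →ₗ[K] W) (Ψ : U →ₗ[K] W) (hΦ : Function.Surjective Φ) (hΨ : Function.Injective Ψ)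
    (S : Submodule K V) (hS : ∀ g, g ∈ S ↔ ∃ f, Ψ f = Φ g) :
    Module.finrank K V + Module.finrank K U = Module.finrank K W + Module.finrank K S := by
  have hker : LinearMap.ker ((LinearMap.range Ψ).mkQ.comp Φ) = S := by
    ext g
    rw [LinearMap.mem_ker, LinearMap.comp_apply, Submodule.mkQ_apply,
      Submodule.Quotient.mk_eq_zero, hS, LinearMap.mem_range]
  have r1 := LinearMap.finrank_range_add_finrank_ker ((LinearMap.range Ψ).mkQ.comp Φ)
  have hsurj : Function.Surjective ((LinearMap.range Ψ).mkQ.comp Φ) := by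
    rw [LinearMap.coe_comp]
    exact ((LinearMap.range Ψ).mkQ_surjective).comp hΦ
  rw [hker, LinearMap.range_eq_top.2 hsurj, finrank_top] at r1
  have r2 := (LinearMap.range Ψ).finrank_quotient_add_finrank
  rw [LinearMap.finrank_range_of_inj hΨ] at r2
  omega

/-- Let `Λ` be a finite-dimensional algebra over a field `K`, `Q` a finitely
generated projective left `Λ`-module, `C ⊆ Q` a submodule, and `M = Q/C`.  With
`Stab = { g ∈ Hom_Λ(Q, JQ) : g(C) ⊆ C }`, all the `K`-spaces `Hom_Λ(Q, JQ)`, `Stab`,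
`Hom_Λ(Q, JM)` and `Hom_Λ(M, JM)` are finite dimensional, and
`dim Hom_Λ(Q, JQ) − dim Stab = dim Hom_Λ(Q, JM) − dim Hom_Λ(M, JM)`. -/
theorem finrank_hom_sub_stab_eq
    (K : Type*) [Field K] (Λ : Type*) [Ring Λ] [Algebra K Λ] [FiniteDimensional K Λ]
    (Q : Type*) [AddCommGroup Q] [Module Λ Q] [Module K Q] [IsScalarTower K Λ Q]
    [Module.Finite Λ Q] [Module.Projective Λ Q]
    (C : Submodule Λ Q) :
    FiniteDimensional K (Q →ₗ[Λ] ↥(radSMul Λ Q)) ∧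
    FiniteDimensional K ↥(homStab K Λ Q C) ∧
    FiniteDimensional K (Q →ₗ[Λ] ↥(radSMul Λ (Q ⧸ C))) ∧
    FiniteDimensional K ((Q ⧸ C) →ₗ[Λ] ↥(radSMul Λ (Q ⧸ C))) ∧
    Module.finrank K (Q →ₗ[Λ] ↥(radSMul Λ Q)) - Module.finrank K ↥(homStab K Λ Q C)
      = Module.finrank K (Q →ₗ[Λ] ↥(radSMul Λ (Q ⧸ C)))
        - Module.finrank K ((Q ⧸ C) →ₗ[Λ] ↥(radSMul Λ (Q ⧸ C))) ∧
    Module.finrank K (Q →ₗ[Λ] ↥(radSMul Λ Q))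
        + Module.finrank K ((Q ⧸ C) →ₗ[Λ] ↥(radSMul Λ (Q ⧸ C)))
      = Module.finrank K (Q →ₗ[Λ] ↥(radSMul Λ (Q ⧸ C)))
        + Module.finrank K ↥(homStab K Λ Q C) := by
  have : FiniteDimensional K Q := Module.Finite.trans Λ Q
  have : FiniteDimensional K (Q ⧸ C) := Module.Finite.trans Λ (Q ⧸ C)
  have : FiniteDimensional K ↥(radSMul Λ Q) :=
    FiniteDimensional.of_injective ((radSMul Λ Q).subtype.restrictScalars K)
      Subtype.val_injective
  have : FiniteDimensional K ↥(radSMul Λ (Q ⧸ C)) :=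
    FiniteDimensional.of_injective ((radSMul Λ (Q ⧸ C)).subtype.restrictScalars K)
      Subtype.val_injective
  have h1 := finiteDimensional_hom K Λ Q ↥(radSMul Λ Q)
  have h2 := finiteDimensional_hom K Λ Q ↥(radSMul Λ (Q ⧸ C))
  have h3 := finiteDimensional_hom K Λ (Q ⧸ C) ↥(radSMul Λ (Q ⧸ C))
  let Φ : (Q →ₗ[Λ] ↥(radSMul Λ Q)) →ₗ[K] (Q →ₗ[Λ] ↥(radSMul Λ (Q ⧸ C))) :=
    { toFun := fun g => (radProj Λ Q C).comp g
      map_add' := fun _ _ => by ext; simp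
      map_smul' := fun k g => by
        ext x
        exact congrArg Subtype.val (LinearMap.map_smul_of_tower (radProj Λ Q C) k (g x)) }
  let Ψ : ((Q ⧸ C) →ₗ[Λ] ↥(radSMul Λ (Q ⧸ C))) →ₗ[K] (Q →ₗ[Λ] ↥(radSMul Λ (Q ⧸ C))) :=
    { toFun := fun g => g.comp C.mkQ
      map_add' := fun _ _ => rfl
      map_smul' := fun _ _ => rfl }
  have hΨ : Function.Injective Ψ := by
    intro a b hab
    refine LinearMap.ext fun y => ?_
    obtain ⟨x, rfl⟩ := C.mkQ_surjective y
    exact LinearMap.congr_fun hab x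
  have hΦ : Function.Surjective Φ := by
    intro g
    obtain ⟨h, hh⟩ := Module.projective_lifting_property (radProj Λ Q C) g
      (radProj_surjective Λ Q C)
    exact ⟨h, hh⟩
  have hS : ∀ g, g ∈ homStab K Λ Q C ↔ ∃ f, Ψ f = Φ g := by
    intro g
    symm
    constructor
    · rintro ⟨f, hf⟩ x hx
      have e := LinearMap.congr_fun hf x
      have e1 : f (C.mkQ x) = radProj Λ Q C (g x) := e
      have e0 : C.mkQ x = 0 := by simpa using hx
      rw [e0, map_zero] at e1
      have e2 : C.mkQ (g x : Q) = 0 := (congrArg Subtype.val e1).symm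
      simpa using e2
    · intro hg
      refine ⟨C.liftQ ((radProj Λ Q C).comp g) ?_, ?_⟩
      · intro x hx
        rw [LinearMap.mem_ker]
        apply Subtype.ext
        change C.mkQ (g x : Q) = 0
        simpa using hg x hx
      · exact C.liftQ_mkQ _ _
  have key := finrank_pullback K (Q →ₗ[Λ] ↥(radSMul Λ Q))
    (Q →ₗ[Λ] ↥(radSMul Λ (Q ⧸ C))) ((Q ⧸ C) →ₗ[Λ] ↥(radSMul Λ (Q ⧸ C))) Φ Ψ hΦ hΨ (homStab K Λ Q C) hS
  refine ⟨h1, FiniteDimensional.finiteDimensional_submodule _, h2, h3, ?_, key⟩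
  omega
end

section
/- Let Q be a finitely generated left Λ-module, g : Q → Q a Λ-linear endomorphism whose image is contained in JQ (so that id_Q + g is an automorphism of Q), and C a Λ-submodule of Q. Then (id_Q + g)(C) = C if and only if g(C) ⊆ C. In other words, the stabilizer of C in the group { id_Q + g : g ∈ Hom_Λ(Q, JQ) } consists exactly of the automorphisms id_Q + g with g ∈ Hom_Λ(Q, JQ) satisfying g(C) ⊆ C. -/
/-- Let `Λ` be a finite-dimensional algebra over a field `K`, `Q` a finitely
generated left `Λ`-module, `g : Q → Q` a `Λ`-linear endomorphism whose image is contained in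
`JQ` (so that `id + g` is an automorphism of `Q`), and `C` a `Λ`-submodule of `Q`.  Then
`(id + g)(C) = C` if and only if `g(C) ⊆ C`. -/
theorem map_one_add_eq_self_iff_map_le
    (K : Type*) [Field K] (Λ : Type*) [Ring Λ] [Algebra K Λ] [FiniteDimensional K Λ]
    (Q : Type*) [AddCommGroup Q] [Module Λ Q] [Module.Finite Λ Q]
    (g : Q →ₗ[Λ] Q)
    (hg : LinearMap.range g ≤ (⊥ : Ideal Λ).jacobson • (⊤ : Submodule Λ Q))
    (C : Submodule Λ Q) :
    Submodule.map (LinearMap.id + g) C = C ↔ ∀ x ∈ C, g x ∈ C := by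
  constructor
  · intro h x hx
    have h1 : (LinearMap.id + g : Q →ₗ[Λ] Q) x ∈ C := h ▸ Submodule.mem_map_of_mem hx
    have h2 := C.sub_mem h1 hx
    simpa using h2
  · intro h
    have : IsArtinianRing Λ := IsArtinianRing.of_finite K Λ
    obtain ⟨n, hn⟩ := IsArtinianRing.isNilpotent_jacobson_bot (R := Λ)
    have key : ∀ k : ℕ, ∀ x : Q,
        (g ^ k) x ∈ ((⊥ : Ideal Λ).jacobson ^ k) • (⊤ : Submodule Λ Q) := by
      intro k
      induction k with
      | zero => intro x; rw [Submodule.pow_zero, Ideal.one_eq_top, Submodule.top_smul]; trivial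
      | succ k ih =>
        intro x
        have h1 : (g ^ (k + 1)) x = g ((g ^ k) x) := by
          rw [pow_succ', Module.End.mul_apply]
        have h2 : g ((g ^ k) x) ∈ Submodule.map g
            (((⊥ : Ideal Λ).jacobson ^ k) • (⊤ : Submodule Λ Q)) :=
          Submodule.mem_map_of_mem (ih x)
        rw [Submodule.map_smul'', Submodule.map_top] at h2
        rw [h1, Submodule.pow_succ, Submodule.mul_smul]
        exact Submodule.smul_mono le_rfl hg h2
    have hz : ∀ x, (g ^ n) x = 0 := by
      intro x
      have := key n x
      rw [hn] at this
      simpa using this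
    have claim : ∀ k : ℕ, ∀ x ∈ C, (g ^ k) x = 0 →
        x ∈ Submodule.map (LinearMap.id + g) C := by
      intro k
      induction k with
      | zero =>
        intro x _ h0
        have : x = 0 := by simpa using h0
        rw [this]; exact Submodule.zero_mem _
      | succ k ih =>
        intro x hx h0
        have h1 := ih (g x) (h x hx) (by rwa [pow_succ, Module.End.mul_apply] at h0)
        have h2 : (LinearMap.id + g : Q →ₗ[Λ] Q) x ∈ Submodule.map (LinearMap.id + g) C :=
          Submodule.mem_map_of_mem hx
        have h3 := Submodule.sub_mem _ h2 h1
        simpa using h3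
    apply le_antisymm
    · rintro _ ⟨x, hx, rfl⟩
      exact C.add_mem hx (h x hx)
    · intro x hx
      exact claim n x hx (hz x)
end
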